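/- Let P, Q ∈ K[x,y] with [P,Q] ∈ K∖{0} (a nonzero constant). Then the Newton polygon of P has no edge of slope 1; precisely, both ℓ_{1,−1}(P) and ℓ_{−1,1}(P) are monomials, i.e. Supp(ℓ_{1,−1}(P)) and Supp(ℓ_{−1,1}(P)) each consist of exactly one point. -/

import Mathlib

open MvPolynomial

noncomputable section

variable {K : Type*} [Field K] [CharZero K]

/-- The support of `P` as a set of pairs `(i,j)` of exponents of `x^i y^j`. -/
def Supp (P : MvPolynomial (Fin 2) K) : Set (ℕ × ℕ) :=
  {p | MvPolynomial.coeff (Finsupp.single 0 p.1 + Finsupp.single 1 p.2) P ≠ 0}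

/-- The Jacobian bracket `[P,Q] = ∂ₓP ∂_yQ − ∂ₓQ ∂_yP`. -/
def Jb (P Q : MvPolynomial (Fin 2) K) : MvPolynomial (Fin 2) K :=
  pderiv 0 P * pderiv 1 Q - pderiv 0 Q * pderiv 1 P

/-- The `(ρ,σ)`-degree `v_{ρ,σ}(P)` (the maximum of `ρi+σj` on the support). -/
def wdeg (ρ σ : ℤ) (P : MvPolynomial (Fin 2) K) : ℤ :=
  sSup {d : ℤ | ∃ p ∈ Supp P, d = ρ * (p.1 : ℤ) + σ * (p.2 : ℤ)}

/-- The support of the `(ρ,σ)`-leading form of `P`. -/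
def LeadSupp (ρ σ : ℤ) (P : MvPolynomial (Fin 2) K) : Set (ℕ × ℕ) :=
  {p | p ∈ Supp P ∧ ρ * (p.1 : ℤ) + σ * (p.2 : ℤ) = wdeg ρ σ P}

/-- `P` is `(ρ,σ)`-homogeneous. -/
def IsHomog (ρ σ : ℤ) (P : MvPolynomial (Fin 2) K) : Prop :=
  ∀ p ∈ Supp P, ∀ q ∈ Supp P,
    ρ * (p.1 : ℤ) + σ * (p.2 : ℤ) = ρ * (q.1 : ℤ) + σ * (q.2 : ℤ)

/-- `P` is a monomial: its support has at most one point. -/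
def IsMonomial (P : MvPolynomial (Fin 2) K) : Prop := (Supp P).Subsingleton

/-- `e` is the point `en_{ρ,σ}(P)`: the point of the support of the leading form
with largest second coordinate. -/
def IsEn (ρ σ : ℤ) (P : MvPolynomial (Fin 2) K) (e : ℕ × ℕ) : Prop :=
  e ∈ LeadSupp ρ σ P ∧ ∀ q ∈ LeadSupp ρ σ P, q.2 ≤ e.2

/-- `e` is the point `st_{ρ,σ}(P)`: the point of the support of the leading form
with smallest second coordinate. -/
def IsSt (ρ σ : ℤ) (P : MvPolynomial (Fin 2) K) (e : ℕ × ℕ) : Prop :=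
  e ∈ LeadSupp ρ σ P ∧ ∀ q ∈ LeadSupp ρ σ P, e.2 ≤ q.2

/-!
Over an algebraically closed field, let `x^m f(xy)` be the leading form `ℓ_{1,-1}(P)`. It is a
monomial as soon as `f` has no root `α ≠ 0`.

Since `[P,Q] = c`, the form `P dQ - c x dy` is closed, hence equal to `dS` for some polynomial `S`,
and `[P,S] = c (P - x ∂ₓP)`. Substitute `x = t⁻¹`, `y = t (u + α)`. In Hahn series in `t` and `u`,
the form `dP ∧ dS / P` is exact, so its residue at `t = u = 0` is zero. On the other hand that
residue is, up to sign, `c α n`, where `n` is the order in `u` of the lowest term of `P`. This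
lowest term comes from `f(u + α)`, so `n` is the multiplicity of `α` as a root of `f`. Hence every
root of `f` is zero.

The other leading form is reduced to this one by exchanging `x` and `y`.
-/

section PolynomialForms

open Finsupp (degree)

variable {σ F : Type*} [Field F]

theorem pderiv_comm {R : Type*} [CommSemiring R] (i j : σ) (G : MvPolynomial σ R) :
    pderiv i (pderiv j G) = pderiv j (pderiv i G) := by
  classical
  rcases eq_or_ne i j with rfl | hij
  · rfl
  · ext s
    simp only [coeff_pderiv, Finsupp.add_apply, Finsupp.single_eq_of_ne hij,
      Finsupp.single_eq_of_ne hij.symm, add_zero, add_right_comm s, mul_right_comm]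

/-- The operator `G ↦ ∫₀¹ λⁿ⁻¹ G(λx) dλ`, which divides the homogeneous component of degree `d`
by `d + n` (and kills it if `d + n = 0`); it is the homotopy operator of the Poincaré lemma. -/
def radialIntegral (n : ℕ) : MvPolynomial σ F →ₗ[F] MvPolynomial σ F :=
  (basisMonomials σ F).constr F fun s ↦ monomial s ((degree s + n : ℕ) : F)⁻¹

theorem radialIntegral_monomial (n : ℕ) (s : σ →₀ ℕ) (a : F) :
    radialIntegral n (monomial s a) = monomial s (a * ((degree s + n : ℕ) : F)⁻¹) := by
  have h : monomial s a = a • basisMonomials σ F s := by simp [smul_monomial]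
  rw [h, map_smul, radialIntegral, Module.Basis.constr_basis, smul_monomial, smul_eq_mul]

theorem pderiv_radialIntegral (n : ℕ) (i : σ) (G : MvPolynomial σ F) :
    pderiv i (radialIntegral n G) = radialIntegral (n + 1) (pderiv i G) := by
  induction G using MvPolynomial.induction_on' with
  | monomial s a =>
    simp only [radialIntegral_monomial, pderiv_monomial]
    rcases Nat.eq_zero_or_pos (s i) with hs | hs
    · simp [hs]
    · have hdeg : degree (s - Finsupp.single i 1) + (n + 1) = degree s + n := by
        have h := Finsupp.single_le_iff.2 (Nat.one_le_iff_ne_zero.2 hs.ne')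
        have := congrArg degree (tsub_add_cancel_of_le h)
        rw [map_add, Finsupp.degree_single] at this
        omega
      rw [hdeg, mul_right_comm]
  | add p q hp hq => simp only [map_add, hp, hq]

theorem radialIntegral_one_add_euler [CharZero F] [Fintype σ] (G : MvPolynomial σ F) :
    radialIntegral 1 G + ∑ i, X i * pderiv i (radialIntegral 1 G) = G := by
  induction G using MvPolynomial.induction_on' with
  | monomial s a =>
    have hs : ((degree s + 1 : ℕ) : F) ≠ 0 := Nat.cast_ne_zero.2 (Nat.succ_ne_zero _)
    rw [radialIntegral_monomial, (isHomogeneous_monomial _ rfl).sum_X_mul_pderiv,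
      ← Nat.cast_smul_eq_nsmul F, smul_monomial, ← map_add, smul_eq_mul]
    congr 1
    push_cast at hs ⊢
    field_simp
    ring
  | add p q hp hq =>
    simp only [map_add, mul_add, Finset.sum_add_distrib]
    linear_combination hp + hq

theorem exists_forall_pderiv_eq [CharZero F] [Finite σ] {ω : σ → MvPolynomial σ F}
    (hω : ∀ i j, pderiv i (ω j) = pderiv j (ω i)) :
    ∃ S, ∀ i, pderiv i S = ω i := by
  classical
  have := Fintype.ofFinite σ
  refine ⟨∑ i, X i * radialIntegral 1 (ω i), fun j ↦ ?_⟩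
  have hclosed (i : σ) : pderiv j (radialIntegral 1 (ω i)) = pderiv i (radialIntegral 1 (ω j)) := by
    rw [pderiv_radialIntegral, hω, pderiv_radialIntegral]
  calc pderiv j (∑ i, X i * radialIntegral 1 (ω i))
      = radialIntegral 1 (ω j) + ∑ i, X i * pderiv i (radialIntegral 1 (ω j)) := by
        simp [pderiv_X, Pi.single_apply, hclosed, Finset.sum_add_distrib, add_comm]
    _ = ω j := radialIntegral_one_add_euler (ω j)

theorem exists_jb_eq_mul_sub [CharZero F] {P Q : MvPolynomial (Fin 2) F} {c : F}
    (hPQ : Jb P Q = C c) :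
    ∃ S, Jb P S = C c * (P - X 0 * pderiv 0 P) := by
  obtain ⟨S, hS⟩ : ∃ S, ∀ i, pderiv i S = ![P * pderiv 0 Q, P * pderiv 1 Q - C c * X 0] i := by
    have hcurl : pderiv 0 (P * pderiv 1 Q - C c * X 0) = pderiv 1 (P * pderiv 0 Q) := by
      rw [Jb] at hPQ
      simp only [pderiv_mul, map_sub, pderiv_C, pderiv_X_self, pderiv_comm 1 0 Q]
      linear_combination hPQ
    refine exists_forall_pderiv_eq fun i j ↦ ?_
    fin_cases i <;> fin_cases j
    exacts [rfl, hcurl, hcurl.symm, rfl]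
  refine ⟨S, ?_⟩
  rw [Jb] at hPQ ⊢
  rw [show pderiv 0 S = P * pderiv 0 Q from hS 0,
    show pderiv 1 S = P * pderiv 1 Q - C c * X 0 from hS 1]
  linear_combination P * hPQ

end PolynomialForms

section Derivations

variable {R : Type*} [CommRing R]

theorem derivation_aeval {A σ : Type*} [CommRing A] [Algebra R A] [Fintype σ]
    (D : Derivation R A A) (v : σ → A) (G : MvPolynomial σ R) :
    D (aeval v G) = ∑ i, aeval v (pderiv i G) * D (v i) := by
  classical
  induction G using MvPolynomial.induction_on with
  | C a => simp
  | add p q hp hq => simp only [map_add, hp, hq, add_mul, Finset.sum_add_distrib]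
  | mul_X p i hp =>
    simp only [map_mul, aeval_X, Derivation.leibniz, hp, pderiv_X, smul_eq_mul, map_add, add_mul,
      Pi.single_apply, mul_ite, mul_one, mul_zero, apply_ite (aeval v), map_zero, ite_mul, zero_mul,
      Finset.sum_add_distrib, Finset.sum_ite_eq, Finset.mem_univ, if_true, Finset.mul_sum,
      mul_assoc]

theorem jacobian_div_eq_sub {L : Type*} [Field L] [Algebra R L] {D₁ D₂ : Derivation R L L} {p : L}
    (hp : p ≠ 0) (hcomm : D₁ (D₂ p) = D₂ (D₁ p)) (s : L) :
    (D₁ p * D₂ s - D₁ s * D₂ p) / p = D₂ (s * (D₁ p / p)) - D₁ (s * (D₂ p / p)) := by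
  simp only [Derivation.leibniz, Derivation.leibniz_div, smul_eq_mul, hcomm]
  field_simp
  ring

end Derivations

section EulerDerivation

variable {Γ R : Type*} [PartialOrder Γ] [CommRing R]

/-- The operator `∑ a_g t^g ↦ ∑ φ(g) a_g t^g` on Hahn series, the additive map underlying
`eulerDerivation`. -/
def scaleCoeff (φ : Γ → R) : HahnSeries Γ R →ₗ[R] HahnSeries Γ R where
  toFun a :=
    { coeff g := φ g * a.coeff g
      isPWO_support' := a.isPWO_support.mono fun _ ↦ right_ne_zero_of_mul }
  map_add' a b := by ext; simp [mul_add]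
  map_smul' r a := by ext; simp [mul_left_comm]

theorem coeff_scaleCoeff (φ : Γ → R) (a : HahnSeries Γ R) (g : Γ) :
    (scaleCoeff φ a).coeff g = φ g * a.coeff g := rfl

theorem support_scaleCoeff_subset (φ : Γ → R) (a : HahnSeries Γ R) :
    (scaleCoeff φ a).support ⊆ a.support := fun _ ↦ right_ne_zero_of_mul

variable [AddCommMonoid Γ] [IsOrderedCancelAddMonoid Γ]

theorem scaleCoeff_mul (φ : Γ →+ R) (a b : HahnSeries Γ R) :
    scaleCoeff φ (a * b) = a * scaleCoeff φ b + b * scaleCoeff φ a := by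
  ext g
  rw [mul_comm b, HahnSeries.coeff_add, coeff_scaleCoeff,
    HahnSeries.coeff_mul_left' a.isPWO_support (support_scaleCoeff_subset φ a),
    HahnSeries.coeff_mul_right' b.isPWO_support (support_scaleCoeff_subset φ b),
    HahnSeries.coeff_mul, Finset.mul_sum, ← Finset.sum_add_distrib]
  refine Finset.sum_congr rfl fun ij hij ↦ ?_
  rw [← (Finset.mem_antidiagonal.1 hij).2.2, coeff_scaleCoeff, coeff_scaleCoeff, map_add]
  ring

/-- The Euler derivation `t^g ↦ φ(g) t^g` of a Hahn series ring attached to a character `φ` of the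
exponents; for exponents in `ℤⁿ` and `φ` the `i`-th coordinate, this is `tᵢ ∂/∂tᵢ`. -/
def eulerDerivation (φ : Γ →+ R) : Derivation R (HahnSeries Γ R) (HahnSeries Γ R) :=
  Derivation.mk' (scaleCoeff φ) (scaleCoeff_mul φ)

@[simp]
theorem coeff_eulerDerivation (φ : Γ →+ R) (a : HahnSeries Γ R) (g : Γ) :
    (eulerDerivation φ a).coeff g = φ g * a.coeff g := rfl

theorem coeff_zero_eulerDerivation (φ : Γ →+ R) (a : HahnSeries Γ R) :
    (eulerDerivation φ a).coeff 0 = 0 := by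
  rw [coeff_eulerDerivation, map_zero, zero_mul]

theorem eulerDerivation_comm (φ ψ : Γ →+ R) (a : HahnSeries Γ R) :
    eulerDerivation φ (eulerDerivation ψ a) = eulerDerivation ψ (eulerDerivation φ a) := by
  ext g
  simp only [coeff_eulerDerivation, mul_left_comm]

theorem eulerDerivation_single (φ : Γ →+ R) (g : Γ) (r : R) :
    eulerDerivation φ (HahnSeries.single g r) = φ g • HahnSeries.single g r := by
  ext h
  by_cases hg : h = g
  · simp [hg]
  · simp [HahnSeries.coeff_single_of_ne hg]

end EulerDerivation

section LogDerivative

variable {Γ F : Type*} [AddCommGroup Γ] [LinearOrder Γ] [IsOrderedAddMonoid Γ] [Field F]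

theorem coeff_eulerDerivation_div_self (φ : Γ →+ F) {p : HahnSeries Γ F} (hp : p ≠ 0) {g : Γ}
    (hg : g ≤ 0) :
    (eulerDerivation φ p / p).coeff g = (HahnSeries.C (φ p.order)).coeff g := by
  set a := eulerDerivation φ p / p - HahnSeries.C (φ p.order) with ha
  suffices h : (0 : Γ) < a.orderTop by
    rw [← sub_eq_zero, ← HahnSeries.coeff_sub]
    exact HahnSeries.coeff_eq_zero_of_lt_orderTop ((WithTop.coe_le_coe.2 hg).trans_lt h)
  have hcoeff : ∀ i ≤ p.order, (a * p).coeff i = 0 := fun i hi ↦ by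
    have : a * p = eulerDerivation φ p - φ p.order • p := by
      rw [ha, sub_mul, div_mul_cancel₀ _ hp, HahnSeries.C_mul_eq_smul]
    rcases hi.lt_or_eq with hi | rfl
    · simp [this, HahnSeries.coeff_eq_zero_of_lt_order hi]
    · simp [this]
  have hlt : (p.order : WithTop Γ) < (a * p).orderTop := by
    by_contra! hle
    obtain ⟨i, hi⟩ := WithTop.ne_top_iff_exists.1 (hle.trans_lt (WithTop.coe_lt_top _)).ne
    exact HahnSeries.coeff_orderTop_ne hi.symm (hcoeff i (WithTop.coe_le_coe.1 (hi ▸ hle)))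
  rw [HahnSeries.orderTop_mul, ← HahnSeries.order_eq_orderTop_of_ne_zero hp] at hlt
  by_contra! hle
  exact hlt.not_ge (by simpa using add_le_add_left hle (p.order : WithTop Γ))

theorem coeff_zero_eulerDerivation_div_self (φ : Γ →+ F) {p : HahnSeries Γ F} (hp : p ≠ 0) :
    (eulerDerivation φ p / p).coeff 0 = φ p.order := by
  rw [coeff_eulerDerivation_div_self φ hp le_rfl, HahnSeries.C_apply, HahnSeries.coeff_single_same]

theorem coeff_eulerDerivation_div_self_of_neg (φ : Γ →+ F) {p : HahnSeries Γ F} (hp : p ≠ 0)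
    {g : Γ} (hg : g < 0) : (eulerDerivation φ p / p).coeff g = 0 := by
  rw [coeff_eulerDerivation_div_self φ hp hg.le, HahnSeries.C_apply,
    HahnSeries.coeff_single_of_ne hg.ne]

theorem coeff_zero_jacobian_div (φ ψ : Γ →+ F) {p : HahnSeries Γ F} (hp : p ≠ 0)
    (s : HahnSeries Γ F) :
    ((eulerDerivation φ p * eulerDerivation ψ s -
      eulerDerivation φ s * eulerDerivation ψ p) / p).coeff 0 = 0 := by
  rw [jacobian_div_eq_sub hp (eulerDerivation_comm φ ψ p), HahnSeries.coeff_sub,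
    coeff_zero_eulerDerivation, coeff_zero_eulerDerivation, sub_zero]

end LogDerivative

section Blowup

variable {F : Type*} [Field F]

/-- The Hahn series variable `t`, of exponent `(1, 0)`. -/
def hahnT (F : Type*) [Field F] : HahnSeries (ℤ ×ₗ ℤ) F := HahnSeries.single (toLex (1, 0)) 1

/-- The Hahn series variable `u`, of exponent `(0, 1)`: by the lexicographic order, `t` is
infinitesimal compared to every power of `u`. -/
def hahnU (F : Type*) [Field F] : HahnSeries (ℤ ×ₗ ℤ) F := HahnSeries.single (toLex (0, 1)) 1

/-- The character `(d, e) ↦ d` of `ℤ ×ₗ ℤ`, whose Euler derivation is `t ∂/∂t`. -/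
def lexFst (F : Type*) [Field F] : ℤ ×ₗ ℤ →+ F where
  toFun g := (ofLex g).1
  map_zero' := by simp
  map_add' a b := by simp

/-- The character `(d, e) ↦ e` of `ℤ ×ₗ ℤ`, whose Euler derivation is `u ∂/∂u`. -/
def lexSnd (F : Type*) [Field F] : ℤ ×ₗ ℤ →+ F where
  toFun g := (ofLex g).2
  map_zero' := by simp
  map_add' a b := by simp

/-- The point `(x, y) = (t⁻¹, t (u + α))`, in whose coordinates `xy = u + α`. -/
def blowupPoint (α : F) : Fin 2 → HahnSeries (ℤ ×ₗ ℤ) F :=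
  ![(hahnT F)⁻¹, hahnT F * (hahnU F + algebraMap F _ α)]

theorem hahnT_ne_zero : hahnT F ≠ 0 := HahnSeries.single_ne_zero one_ne_zero

theorem nsmul_toLex_mk (n : ℕ) (a b : ℤ) :
    n • (toLex (a, b) : ℤ ×ₗ ℤ) = toLex (n * a, n * b) := by
  have := map_nsmul (toLexAddEquiv (ℤ × ℤ)) n (a, b)
  simpa using this.symm

theorem coeff_aeval_hahnU (f : Polynomial F) (d e : ℤ) :
    (Polynomial.aeval (hahnU F) f).coeff (toLex (d, e)) =
      if d = 0 ∧ 0 ≤ e then f.coeff e.toNat else 0 := by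
  induction f using Polynomial.induction_on' with
  | add p q hp hq => split_ifs at * <;> simp_all
  | monomial n a =>
    have h : (Polynomial.aeval (hahnU F) (Polynomial.monomial n a)) =
        HahnSeries.single (toLex (0, (n : ℤ))) a := by
      rw [Polynomial.aeval_monomial, hahnU, HahnSeries.single_pow, nsmul_toLex_mk,
        ← HahnSeries.C_eq_algebraMap, HahnSeries.C_apply, HahnSeries.single_mul_single]
      simp
    rw [h, Polynomial.coeff_monomial]
    by_cases hde : d = 0 ∧ e = n
    · simp [hde.1, hde.2]
    · rw [HahnSeries.coeff_single_of_ne fun h ↦ hde (by simpa using h)]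
      split_ifs <;> first | rfl | omega

/-- The polynomial `f` for which `x^m f(xy)` is the `(1, -1)`-homogeneous component of degree `m`
of `P`. -/
def diagonalPart (m : ℤ) : MvPolynomial (Fin 2) F →ₗ[F] Polynomial F :=
  (aeval ![1, Polynomial.X]).toLinearMap ∘ₗ weightedHomogeneousComponent ![1, -1] m

theorem diagonalPart_monomial (m : ℤ) (s : Fin 2 →₀ ℕ) (a : F) :
    diagonalPart m (monomial s a) =
      if (s 0 : ℤ) - s 1 = m then Polynomial.monomial (s 1) a else 0 := by
  have hs := isWeightedHomogeneous_monomial ![1, -1] s a rfl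
  rw [diagonalPart, LinearMap.comp_apply, weightedHomogeneousComponent_of_mem hs]
  have : Finsupp.weight ![1, -1] s = (s 0 : ℤ) - s 1 := by
    simp [Finsupp.weight_apply, Finsupp.sum_fintype, sub_eq_add_neg]
  simp only [this, eq_comm (a := m)]
  split_ifs
  · simp [aeval_monomial, Finsupp.prod_fintype, Polynomial.C_mul_X_pow_eq_monomial]
  · simp

theorem aeval_blowupPoint_monomial (α : F) (s : Fin 2 →₀ ℕ) (a : F) :
    aeval (blowupPoint α) (monomial s a) =
      HahnSeries.single (toLex ((s 1 : ℤ) - s 0, 0)) 1 *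
        Polynomial.aeval (hahnU F) (Polynomial.taylor α (Polynomial.monomial (s 1) a)) := by
  have hT : (HahnSeries.single (toLex ((s 1 : ℤ) - s 0, 0)) 1 : HahnSeries (ℤ ×ₗ ℤ) F) =
      (hahnT F)⁻¹ ^ s 0 * hahnT F ^ s 1 := by
    rw [hahnT, HahnSeries.inv_single, HahnSeries.single_pow, HahnSeries.single_pow,
      HahnSeries.single_mul_single, ← toLex_neg, nsmul_toLex_mk, nsmul_toLex_mk, ← toLex_add]
    simp [sub_eq_neg_add]
  simp only [hT, aeval_monomial, blowupPoint, Finsupp.prod_fintype, pow_zero, Fin.prod_univ_two,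
    Matrix.cons_val_zero, Matrix.cons_val_one, implies_true, mul_pow, Polynomial.taylor_monomial,
    map_mul, map_pow, map_add, Polynomial.aeval_C, Polynomial.aeval_X]
  ring

theorem coeff_aeval_blowupPoint (α : F) (P : MvPolynomial (Fin 2) F) (d e : ℤ) :
    (aeval (blowupPoint α) P).coeff (toLex (d, e)) =
      if 0 ≤ e then (Polynomial.taylor α (diagonalPart (-d) P)).coeff e.toNat else 0 := by
  induction P using MvPolynomial.induction_on' with
  | add p q hp hq => split_ifs at * <;> simp_all
  | monomial s a =>
    rw [aeval_blowupPoint_monomial, HahnSeries.coeff_single_mul, one_mul, ← toLex_sub,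
      Prod.mk_sub_mk, sub_zero, coeff_aeval_hahnU, diagonalPart_monomial]
    by_cases hd : (s 0 : ℤ) - s 1 = -d
    · have hd' : d - (s 1 - s 0) = 0 := by omega
      simp [hd, hd']
    · have hd' : d - (s 1 - s 0) ≠ 0 := by omega
      simp [hd, hd']

theorem eulerDerivation_lexFst_hahnT : eulerDerivation (lexFst F) (hahnT F) = hahnT F := by
  simp [hahnT, eulerDerivation_single, lexFst]

theorem eulerDerivation_lexSnd_hahnT : eulerDerivation (lexSnd F) (hahnT F) = 0 := by
  simp [hahnT, eulerDerivation_single, lexSnd]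

theorem eulerDerivation_lexFst_hahnU : eulerDerivation (lexFst F) (hahnU F) = 0 := by
  simp [hahnU, eulerDerivation_single, lexFst]

theorem eulerDerivation_lexSnd_hahnU : eulerDerivation (lexSnd F) (hahnU F) = hahnU F := by
  simp [hahnU, eulerDerivation_single, lexSnd]

theorem eulerDerivation_lexFst_aeval_blowupPoint (α : F) (G : MvPolynomial (Fin 2) F) :
    eulerDerivation (lexFst F) (aeval (blowupPoint α) G) =
      aeval (blowupPoint α) (X 1 * pderiv 1 G - X 0 * pderiv 0 G) := by
  rw [derivation_aeval, Fin.sum_univ_two, map_sub, map_mul, map_mul, aeval_X, aeval_X]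
  simp only [blowupPoint, Matrix.cons_val_zero, Matrix.cons_val_one, Derivation.leibniz_inv,
    Derivation.leibniz, map_add, eulerDerivation_lexFst_hahnT, eulerDerivation_lexFst_hahnU,
    Derivation.map_algebraMap, smul_eq_mul]
  field_simp [hahnT_ne_zero (F := F)]
  ring

theorem eulerDerivation_lexSnd_aeval_blowupPoint (α : F) (G : MvPolynomial (Fin 2) F) :
    eulerDerivation (lexSnd F) (aeval (blowupPoint α) G) =
      hahnT F * hahnU F * aeval (blowupPoint α) (pderiv 1 G) := by
  rw [derivation_aeval, Fin.sum_univ_two]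
  simp only [blowupPoint, Matrix.cons_val_zero, Matrix.cons_val_one, Derivation.leibniz_inv,
    Derivation.leibniz, map_add, eulerDerivation_lexSnd_hahnT, eulerDerivation_lexSnd_hahnU,
    Derivation.map_algebraMap, smul_eq_mul]
  ring

theorem jacobian_aeval_blowupPoint (α : F) {P S : MvPolynomial (Fin 2) F} {c : F}
    (hS : Jb P S = C c * (P - X 0 * pderiv 0 P)) {p s : HahnSeries (ℤ ×ₗ ℤ) F}
    (hp : p = aeval (blowupPoint α) P) (hs : s = aeval (blowupPoint α) S) :
    eulerDerivation (lexFst F) p * eulerDerivation (lexSnd F) s -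
        eulerDerivation (lexFst F) s * eulerDerivation (lexSnd F) p =
      algebraMap F _ c * ((hahnU F + algebraMap F _ α) * eulerDerivation (lexSnd F) p -
        hahnU F * eulerDerivation (lexFst F) p - hahnU F * p) := by
  have hTx : hahnT F * blowupPoint α 0 = 1 := mul_inv_cancel₀ hahnT_ne_zero
  have hy : blowupPoint α 1 = hahnT F * (hahnU F + algebraMap F _ α) := rfl
  have hJ := congrArg (aeval (blowupPoint α)) hS
  simp only [Jb, map_sub, map_mul, aeval_X, aeval_C] at hJ
  simp only [hp, hs, eulerDerivation_lexFst_aeval_blowupPoint,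
    eulerDerivation_lexSnd_aeval_blowupPoint, map_sub, map_mul, aeval_X, hy]
  linear_combination (-hahnU F) * hJ -
    hahnU F * (aeval (blowupPoint α) (pderiv 0 P) * aeval (blowupPoint α) (pderiv 1 S) -
      aeval (blowupPoint α) (pderiv 0 S) * aeval (blowupPoint α) (pderiv 1 P)) * hTx

theorem coeff_zero_hahnU_mul (a : HahnSeries (ℤ ×ₗ ℤ) F) :
    (hahnU F * a).coeff 0 = a.coeff (toLex (0, -1)) := by
  rw [hahnU, HahnSeries.coeff_single_mul, one_mul, zero_sub]
  rfl

theorem mul_order_aeval_blowupPoint_eq_zero (α : F) {P S : MvPolynomial (Fin 2) F} {c : F}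
    (hc : c ≠ 0) (hS : Jb P S = C c * (P - X 0 * pderiv 0 P))
    (hP : aeval (blowupPoint α) P ≠ 0) :
    α * lexSnd F (aeval (blowupPoint α) P).order = 0 := by
  set p := aeval (blowupPoint α) P with hp
  have hneg : (toLex (0, -1) : ℤ ×ₗ ℤ) < 0 := Prod.Lex.toLex_lt_toLex.2 (.inr ⟨rfl, by simp⟩)
  have hU : (hahnU F).coeff 0 = 0 :=
    HahnSeries.coeff_single_of_ne (by simp [← toLex_zero, Prod.ext_iff])
  have hUlog (φ : ℤ ×ₗ ℤ →+ F) : (hahnU F * (eulerDerivation φ p / p)).coeff 0 = 0 := by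
    rw [coeff_zero_hahnU_mul, coeff_eulerDerivation_div_self_of_neg φ hP hneg]
  have hres := coeff_zero_jacobian_div (lexFst F) (lexSnd F) hP (aeval (blowupPoint α) S)
  rw [jacobian_aeval_blowupPoint α hS hp rfl, mul_div_assoc, sub_div, sub_div, mul_div_assoc,
    mul_div_assoc, mul_div_cancel_right₀ _ hP] at hres
  simpa [← HahnSeries.C_eq_algebraMap, HahnSeries.C_mul_eq_smul, add_mul, mul_assoc, hc, hU,
    hUlog, coeff_zero_eulerDerivation_div_self _ hP] using hres

theorem eq_zero_of_eval_diagonalPart_eq_zero [CharZero F] {P S : MvPolynomial (Fin 2) F} {c α : F}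
    (hc : c ≠ 0) (hS : Jb P S = C c * (P - X 0 * pderiv 0 P)) {m : ℤ}
    (hm : ∀ m' > m, diagonalPart m' P = 0) (hf : diagonalPart m P ≠ 0)
    (hα : (diagonalPart m P).eval α = 0) : α = 0 := by
  obtain ⟨n, hn⟩ : ∃ n, (Polynomial.taylor α (diagonalPart m P)).coeff n ≠ 0 := by
    by_contra! h
    exact hf ((Polynomial.taylor_eq_zero α _).1 (Polynomial.ext h))
  have hcoeff : (aeval (blowupPoint α) P).coeff (toLex (-m, (n : ℤ))) ≠ 0 := by
    simpa [coeff_aeval_blowupPoint] using hn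
  have hP : aeval (blowupPoint α) P ≠ 0 := fun h ↦ hcoeff (by rw [h, HahnSeries.coeff_zero])
  have hle := HahnSeries.order_le_of_coeff_ne_zero hcoeff
  have horder := HahnSeries.coeff_order_eq_zero.not.2 hP
  have hmul := mul_order_aeval_blowupPoint_eq_zero α hc hS hP
  obtain ⟨⟨d, e⟩, hde⟩ := toLex.surjective (aeval (blowupPoint α) P).order
  rw [← hde, coeff_aeval_blowupPoint] at horder
  rw [← hde, Prod.Lex.toLex_le_toLex] at hle
  have hd : -d = m := by
    rcases hle with hlt | ⟨heq, -⟩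
    · simp [hm (-d) (lt_neg.1 hlt)] at horder
    · simp [show d = -m from heq]
  have he : e ≠ 0 := by
    rintro rfl
    simp [hd, Polynomial.taylor_coeff_zero, hα] at horder
  rw [← hde] at hmul
  exact (mul_eq_zero.1 hmul).resolve_right (Int.cast_ne_zero.2 he)

end Blowup

section NewtonPolygon

variable {F : Type*} [Field F]

theorem leadSupp_map {L : Type*} [Field L] (f : F →+* L) (ρ σ : ℤ)
    (P : MvPolynomial (Fin 2) F) : LeadSupp ρ σ (map f P) = LeadSupp ρ σ P := by
  have hSupp : Supp (map f P) = Supp P := by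
    ext p
    simp only [Supp, coeff_map, map_ne_zero_iff f f.injective]
  rw [LeadSupp, LeadSupp, wdeg, wdeg, hSupp]

theorem jb_map {L : Type*} [Field L] (f : F →+* L) (P Q : MvPolynomial (Fin 2) F) :
    Jb (map f P) (map f Q) = map f (Jb P Q) := by
  simp only [Jb, pderiv_map, map_sub, map_mul]

theorem mem_supp_rename_swap {P : MvPolynomial (Fin 2) F} {p : ℕ × ℕ} :
    p ∈ Supp (rename (Equiv.swap 0 1) P) ↔ p.swap ∈ Supp P := by
  have h : Finsupp.single 0 p.1 + Finsupp.single 1 p.2 = Finsupp.mapDomain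
      (Equiv.swap (0 : Fin 2) 1) (Finsupp.single 0 p.2 + Finsupp.single 1 p.1) := by
    simp [Finsupp.mapDomain_add, Finsupp.mapDomain_single, add_comm]
  rw [Supp, Set.mem_ofPred_eq, h, coeff_rename_mapDomain _ (Equiv.injective _)]
  rfl

theorem leadSupp_eq_image_swap (ρ σ : ℤ) (P : MvPolynomial (Fin 2) F) :
    LeadSupp ρ σ P = Prod.swap '' LeadSupp σ ρ (rename (Equiv.swap 0 1) P) := by
  have hwdeg : wdeg σ ρ (rename (Equiv.swap 0 1) P) = wdeg ρ σ P := by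
    refine congrArg sSup (Set.ext fun d ↦ Prod.swap_surjective.exists.trans ?_)
    simp only [mem_supp_rename_swap, Prod.swap_swap, Prod.fst_swap, Prod.snd_swap, add_comm,
      Set.mem_ofPred_eq]
  ext p
  simp [Set.image_swap_eq_preimage_swap, LeadSupp, mem_supp_rename_swap, hwdeg, add_comm]

theorem jb_rename_swap (P Q : MvPolynomial (Fin 2) F) :
    Jb (rename (Equiv.swap 0 1) P) (rename (Equiv.swap 0 1) Q) =
      -rename (Equiv.swap 0 1) (Jb P Q) := by
  have h (i : Fin 2) (G : MvPolynomial (Fin 2) F) :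
      pderiv (Equiv.swap 0 1 i) (rename (Equiv.swap 0 1) G) =
        rename (Equiv.swap 0 1) (pderiv i G) := pderiv_rename (Equiv.injective _) i G
  have h₀ := h 0
  have h₁ := h 1
  rw [Equiv.swap_apply_left] at h₀
  rw [Equiv.swap_apply_right] at h₁
  simp only [Jb, h₀, h₁, map_sub, map_mul]
  ring

theorem finite_setOf_weight_supp (ρ σ : ℤ) (P : MvPolynomial (Fin 2) F) :
    {d : ℤ | ∃ p ∈ Supp P, d = ρ * (p.1 : ℤ) + σ * (p.2 : ℤ)}.Finite := by
  refine (P.support.finite_toSet.image fun s ↦ ρ * (s 0 : ℤ) + σ * (s 1 : ℤ)).subset ?_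
  rintro _ ⟨p, hp, rfl⟩
  exact ⟨_, mem_support_iff.2 hp, by simp⟩

theorem le_wdeg (ρ σ : ℤ) {P : MvPolynomial (Fin 2) F} {p : ℕ × ℕ} (hp : p ∈ Supp P) :
    ρ * (p.1 : ℤ) + σ * (p.2 : ℤ) ≤ wdeg ρ σ P :=
  le_csSup (finite_setOf_weight_supp ρ σ P).bddAbove ⟨p, hp, rfl⟩

theorem leadSupp_nonempty (ρ σ : ℤ) {P : MvPolynomial (Fin 2) F} (hP : P ≠ 0) :
    (LeadSupp ρ σ P).Nonempty := by
  obtain ⟨s, hs⟩ := ne_zero_iff.1 hP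
  have hmem : (s 0, s 1) ∈ Supp P := by
    have hsum : Finsupp.single 0 (s 0) + Finsupp.single 1 (s 1) = s := by
      ext i; fin_cases i <;> simp
    simpa only [Supp, Set.mem_ofPred_eq, hsum] using hs
  obtain ⟨p, hp, hpdeg⟩ :=
    Int.csSup_mem (by exact ⟨_, _, hmem, rfl⟩) (finite_setOf_weight_supp ρ σ P).bddAbove
  exact ⟨p, hp, hpdeg.symm⟩

theorem coeff_diagonalPart (m : ℤ) (P : MvPolynomial (Fin 2) F) (j : ℕ) :
    (diagonalPart m P).coeff j =
      if 0 ≤ m + j then P.coeff (Finsupp.single 0 (m + j).toNat + Finsupp.single 1 j) else 0 := by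
  induction P using MvPolynomial.induction_on' with
  | add p q hp hq => split_ifs at * <;> simp_all
  | monomial s a =>
    have hs (i : ℕ) : s = Finsupp.single 0 i + Finsupp.single 1 j ↔ s 0 = i ∧ s 1 = j := by
      simp [Finsupp.ext_iff, Fin.forall_fin_two]
    rw [diagonalPart_monomial, coeff_monomial, apply_ite (Polynomial.coeff · j),
      Polynomial.coeff_monomial, Polynomial.coeff_zero]
    simp only [hs]
    split_ifs <;> first | rfl | omega

theorem coeff_diagonalPart_ne_zero_iff {P : MvPolynomial (Fin 2) F} {m : ℤ} {j : ℕ} :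
    (diagonalPart m P).coeff j ≠ 0 ↔ ∃ i : ℕ, (i, j) ∈ Supp P ∧ (i : ℤ) - j = m := by
  rw [coeff_diagonalPart, ite_ne_right_iff]
  constructor
  · rintro ⟨hm, hP⟩
    exact ⟨(m + j).toNat, hP, by omega⟩
  · rintro ⟨i, hP, rfl⟩
    exact ⟨by omega, by simpa [Supp] using hP⟩

theorem coeff_diagonalPart_wdeg_ne_zero_iff {P : MvPolynomial (Fin 2) F} {j : ℕ} :
    (diagonalPart (wdeg 1 (-1) P) P).coeff j ≠ 0 ↔ ∃ i : ℕ, (i, j) ∈ LeadSupp 1 (-1) P := by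
  simp only [coeff_diagonalPart_ne_zero_iff, LeadSupp, Set.mem_ofPred_eq, one_mul, neg_mul,
    ← sub_eq_add_neg]

theorem diagonalPart_eq_zero_of_wdeg_lt {P : MvPolynomial (Fin 2) F} {m : ℤ}
    (hm : wdeg 1 (-1) P < m) : diagonalPart m P = 0 := by
  ext j
  by_contra h
  obtain ⟨i, hij, rfl⟩ := coeff_diagonalPart_ne_zero_iff.1 h
  have := le_wdeg 1 (-1) hij
  dsimp only at this
  omega

end NewtonPolygon

section ConstantBracket

theorem exists_eq_monomial_of_forall_isRoot {F : Type*} [Field F] [IsAlgClosed F]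
    {f : Polynomial F} (hf : f ≠ 0) (h : ∀ a, f.IsRoot a → a = 0) :
    ∃ n a, f = Polynomial.monomial n a := by
  have hroots : f.roots = Multiset.replicate f.roots.card 0 :=
    Multiset.eq_replicate_card.2 fun a ha ↦ h a ((Polynomial.mem_roots hf).1 ha)
  have hprod := (IsAlgClosed.splits f).eq_prod_roots
  rw [hroots, Multiset.map_replicate, Multiset.prod_replicate, map_zero, sub_zero,
    Polynomial.C_mul_X_pow_eq_monomial] at hprod
  exact ⟨_, _, hprod⟩

variable {F : Type*} [Field F] {P Q : MvPolynomial (Fin 2) F} {c : F}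

theorem ne_zero_of_jb_eq_C (hc : c ≠ 0) (hPQ : Jb P Q = C c) : P ≠ 0 := by
  rintro rfl
  refine hc (C_eq_zero.1 (hPQ.symm.trans ?_))
  rw [Jb, map_zero, map_zero, zero_mul, mul_zero, sub_zero]

variable [CharZero F]

theorem exists_leadSupp_eq_singleton_of_isAlgClosed [IsAlgClosed F] (hc : c ≠ 0)
    (hPQ : Jb P Q = C c) : ∃ p, LeadSupp 1 (-1) P = {p} := by
  obtain ⟨S, hS⟩ := exists_jb_eq_mul_sub hPQ
  obtain ⟨⟨i₀, j₀⟩, h₀⟩ := leadSupp_nonempty 1 (-1) (ne_zero_of_jb_eq_C hc hPQ)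
  have hf : diagonalPart (wdeg 1 (-1) P) P ≠ 0 := fun h ↦
    coeff_diagonalPart_wdeg_ne_zero_iff.2 ⟨i₀, h₀⟩ (by rw [h, Polynomial.coeff_zero])
  obtain ⟨n, a, hna⟩ := exists_eq_monomial_of_forall_isRoot hf fun α hα ↦
    eq_zero_of_eval_diagonalPart_eq_zero hc hS (fun _ ↦ diagonalPart_eq_zero_of_wdeg_lt) hf hα
  have hsnd {i j : ℕ} (hij : (i, j) ∈ LeadSupp 1 (-1) P) : j = n := by
    have := coeff_diagonalPart_wdeg_ne_zero_iff.2 ⟨i, hij⟩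
    rw [hna, Polynomial.coeff_monomial] at this
    exact (ite_ne_right_iff.1 this).1.symm
  refine ⟨(i₀, j₀), Set.eq_singleton_iff_unique_mem.2 ⟨h₀, fun ⟨i, j⟩ hij ↦ ?_⟩⟩
  have hj : j = j₀ := (hsnd hij).trans (hsnd h₀).symm
  have hdeg := hij.2.trans h₀.2.symm
  ext <;> dsimp only at hdeg ⊢ <;> omega

theorem exists_leadSupp_one_neg_one_eq_singleton (hc : c ≠ 0) (hPQ : Jb P Q = C c) :
    ∃ p, LeadSupp 1 (-1) P = {p} := by
  rw [← leadSupp_map (algebraMap F (AlgebraicClosure F))]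
  refine exists_leadSupp_eq_singleton_of_isAlgClosed (Q := map (algebraMap F _) Q)
    (c := algebraMap F _ c) (by simpa using hc) ?_
  rw [jb_map, hPQ, map_C]

theorem exists_leadSupp_neg_one_one_eq_singleton (hc : c ≠ 0) (hPQ : Jb P Q = C c) :
    ∃ p, LeadSupp (-1) 1 P = {p} := by
  have hswap : Jb (rename (Equiv.swap 0 1) P) (rename (Equiv.swap 0 1) Q) = C (-c) := by
    rw [jb_rename_swap, hPQ, rename_C, map_neg]
  obtain ⟨p, hp⟩ := exists_leadSupp_one_neg_one_eq_singleton (neg_ne_zero.2 hc) hswap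
  exact ⟨p.swap, by rw [leadSupp_eq_image_swap, hp, Set.image_singleton]⟩

end ConstantBracket

/-- If `[P,Q]` is a nonzero constant, then the Newton polygon of `P` has no edge of
slope 1: both `ℓ_{1,-1}(P)` and `ℓ_{-1,1}(P)` are monomials, i.e. their supports
consist of exactly one point. -/
theorem stmt2 (K : Type*) [Field K] [CharZero K] (P Q : MvPolynomial (Fin 2) K)
    (c : K) (hc : c ≠ 0) (hPQ : Jb P Q = MvPolynomial.C c) :
    (∃ p : ℕ × ℕ, LeadSupp 1 (-1) P = {p}) ∧ (∃ p : ℕ × ℕ, LeadSupp (-1) 1 P = {p}) := by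
  exact ⟨exists_leadSupp_one_neg_one_eq_singleton hc hPQ,
    exists_leadSupp_neg_one_one_eq_singleton hc hPQ⟩

end
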